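/- Let q be a prime, let P(2,q) be the group of invertible upper-triangular 2×2 matrices over the field F_q, let U₀ ≤ P(2,q) be the subgroup of unipotent matrices (upper-triangular with both diagonal entries equal to 1) and let D ≤ P(2,q) be the subgroup of diagonal matrices. Then every subgroup U of P(2,q) is either of the form U = ⟨U₀, s⟩ (the subgroup generated by U₀ and s) for some subgroup s ≤ D, or of the form U = u s u⁻¹ (the conjugate of s by u) for some subgroup s ≤ D and some element u ∈ U₀. -/

import Mathlib

/-!
`P(2,q) = U₀ ⋊ D`, where `U₀` has prime order `q` and its index, a divisor of `(q - 1)²`, is prime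
to `q`. As `U₀` has no proper nontrivial subgroups, `U` either contains `U₀` or meets it trivially.
If `U₀ ≤ U`, the modular law gives `U = U₀ ⊔ (D ⊓ U)`.

If `U ⊓ U₀ = 1`, the argument is the conjugacy half of the Schur–Zassenhaus theorem for an abelian
normal Hall subgroup `N`. The group acts on the classes of transversals of `N`, and `N` acts simply
transitively on these classes, so the stabilizers of the classes are complements of `N`, all
conjugate under `N`. A subgroup that meets `N` trivially fixes some class; `D` is thus the full
stabilizer of a class, and `U` lies in a conjugate of `D`.
-/

def P2 (q : ℕ) [Fact q.Prime] :
    Subgroup (Matrix.GeneralLinearGroup (Fin 2) (ZMod q)) where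
  carrier := {M | (M : Matrix (Fin 2) (Fin 2) (ZMod q)) 1 0 = 0}
  one_mem' := by simp [Matrix.one_apply]
  mul_mem' := by
    intro a b ha hb
    simp only [Set.mem_setOf_eq] at *
    simp [Matrix.mul_apply, Fin.sum_univ_two, ha, hb]
  inv_mem' := by
    intro a ha
    simp only [Set.mem_setOf_eq] at *
    rw [Matrix.coe_units_inv, Matrix.inv_def, Matrix.adjugate_fin_two]
    simp [ha]

/-- The matrix entries of an element of `P(2,q)`. -/
def ent {q : ℕ} [Fact q.Prime] (u : ↥(P2 q)) (i j : Fin 2) : ZMod q :=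
  ((u : Matrix.GeneralLinearGroup (Fin 2) (ZMod q)) : Matrix (Fin 2) (Fin 2) (ZMod q)) i j

/-- The subgroup of unipotent upper triangular matrices in `P(2,q)`. -/
def U0 (q : ℕ) [Fact q.Prime] : Subgroup ↥(P2 q) where
  carrier := {u | ent u 0 0 = 1 ∧ ent u 1 1 = 1}
  one_mem' := by constructor <;> simp [ent, Matrix.one_apply]
  mul_mem' := by
    rintro a b ⟨ha1, ha2⟩ ⟨hb1, hb2⟩
    have hb0 : ent b 1 0 = 0 := b.2
    have ha0 : ent a 1 0 = 0 := a.2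
    constructor <;>
      simp_all [ent, Matrix.mul_apply, Fin.sum_univ_two]
  inv_mem' := by
    rintro a ⟨ha1, ha2⟩
    have ha0 : ent a 1 0 = 0 := a.2
    simp only [ent, Set.mem_setOf_eq] at *
    have : ((((a : ↥(P2 q))⁻¹ : ↥(P2 q)) : Matrix.GeneralLinearGroup (Fin 2) (ZMod q)) :
        Matrix (Fin 2) (Fin 2) (ZMod q)) =
        (((a : Matrix.GeneralLinearGroup (Fin 2) (ZMod q)) :
          Matrix (Fin 2) (Fin 2) (ZMod q)))⁻¹ := by
      rw [← Matrix.coe_units_inv]; norm_cast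
    rw [this, Matrix.inv_def, Matrix.adjugate_fin_two, Matrix.det_fin_two]
    constructor <;> simp [ha0, ha1, ha2]

/-- The subgroup of diagonal matrices in `P(2,q)`. -/
def DiagSub (q : ℕ) [Fact q.Prime] : Subgroup ↥(P2 q) where
  carrier := {u | ent u 0 1 = 0}
  one_mem' := by simp [ent, Matrix.one_apply]
  mul_mem' := by
    intro a b ha hb
    simp only [ent, Set.mem_setOf_eq] at *
    simp [Matrix.mul_apply, Fin.sum_univ_two, ha, hb]
  inv_mem' := by
    intro a ha
    simp only [ent, Set.mem_setOf_eq] at *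
    have : ((((a : ↥(P2 q))⁻¹ : ↥(P2 q)) : Matrix.GeneralLinearGroup (Fin 2) (ZMod q)) :
        Matrix (Fin 2) (Fin 2) (ZMod q)) =
        (((a : Matrix.GeneralLinearGroup (Fin 2) (ZMod q)) :
          Matrix (Fin 2) (Fin 2) (ZMod q)))⁻¹ := by
      rw [← Matrix.coe_units_inv]; norm_cast
    rw [this, Matrix.inv_def, Matrix.adjugate_fin_two]
    simp [ha]

open MulAction Subgroup
open scoped Pointwise

section NormalHallSubgroup

variable {G : Type*} [Group G] {N D : Subgroup G}

lemma le_or_disjoint_of_prime_card [Fact (Nat.card N).Prime] (U : Subgroup G) :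
    N ≤ U ∨ Disjoint U N := by
  rw [← subgroupOf_eq_top, ← subgroupOf_eq_bot, or_comm]
  exact eq_bot_or_eq_top_of_prime_card _

lemma sup_inf_assoc_of_normal_of_le {U : Subgroup G} [N.Normal] (hNU : N ≤ U) :
    (N ⊔ D) ⊓ U = N ⊔ D ⊓ U := by
  apply SetLike.coe_injective
  rw [coe_inf, normal_mul, normal_mul, mul_inf_assoc N D U hNU]

lemma isComplement_mul_left_of_injective {R S T : Set G} (hR : IsComplement R (S * T))
    (hST : Function.Injective fun x : S × T => (x.1 * x.2 : G)) : IsComplement (R * S) T := by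
  constructor
  · rintro ⟨⟨_, r, hr, s, hs, rfl⟩, t, ht⟩ ⟨⟨_, r', hr', s', hs', rfl⟩, t', ht'⟩ h
    have hr_st := @hR.1 (⟨r, hr⟩, ⟨s * t, Set.mul_mem_mul hs ht⟩)
      (⟨r', hr'⟩, ⟨s' * t', Set.mul_mem_mul hs' ht'⟩) (by simpa [mul_assoc] using h)
    simp only [Prod.mk.injEq, Subtype.mk.injEq] at hr_st
    have hs_t := @hST (⟨s, hs⟩, ⟨t, ht⟩) (⟨s', hs'⟩, ⟨t', ht'⟩) hr_st.2
    simp_all only [Prod.mk.injEq, Subtype.mk.injEq]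
  · intro g
    obtain ⟨⟨r, _, s, hs, t, ht, rfl⟩, rfl⟩ := hR.2 g
    exact ⟨(⟨r * s, Set.mul_mem_mul r.2 hs⟩, ⟨t, ht⟩), mul_assoc _ _ _⟩

lemma eq_of_le_of_isComplement' {K : Subgroup G} [N.FiniteIndex] (hD : IsComplement' N D)
    (hK : IsComplement' N K) (hDK : D ≤ K) : D = K := by
  have : Finite K := Nat.finite_of_card_ne_zero (hK.card_right ▸ FiniteIndex.index_ne_zero)
  exact eq_of_le_of_card_ge hDK (hK.card_right.trans hD.card_right.symm).le

lemma exists_le_stabilizer_of_disjoint {U : Subgroup G} [N.Normal] [IsMulCommutative N]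
    [N.FiniteIndex] (hU : Disjoint U N) : ∃ α : N.QuotientDiff, U ≤ stabilizer G α := by
  obtain ⟨R, hR, -⟩ := exists_isComplement_left (U ⊔ N) 1
  rw [mul_normal] at hR
  -- `R * U` is a transversal of `N` that right multiplication by elements of `U` leaves invariant.
  have hRU : IsComplement (R * (U : Set G)) N :=
    isComplement_mul_left_of_injective hR (mul_injective_of_disjoint hU)
  refine ⟨Quotient.mk'' ⟨R * U, hRU⟩, fun u hu => ?_⟩
  have hfix : MulOpposite.op u⁻¹ • (R * (U : Set G)) = R * (U : Set G) := by
    rw [← mul_smul_comm, op_smul_coe_set (inv_mem hu)]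
  exact congr_arg Quotient.mk'' (Subtype.ext hfix)

lemma exists_le_map_conj_of_disjoint {U : Subgroup G} [N.Normal] [IsMulCommutative N]
    [N.FiniteIndex] (hN : (Nat.card N).Coprime N.index) (hD : IsComplement' N D)
    (hU : Disjoint U N) : ∃ n ∈ N, U ≤ D.map (MulAut.conj n).toMonoidHom := by
  obtain ⟨α, hUα⟩ := exists_le_stabilizer_of_disjoint hU
  obtain ⟨β, hDβ⟩ := exists_le_stabilizer_of_disjoint hD.disjoint.symm
  obtain ⟨n, rfl⟩ := exists_smul_eq hN β α
  have hDβ_eq : D = stabilizer G β :=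
    eq_of_le_of_isComplement' hD (isComplement'_stabilizer_of_coprime hN) hDβ
  refine ⟨n, n.2, hUα.trans ?_⟩
  rw [hDβ_eq, ← stabilizer_smul_eq_stabilizer_map_conj]
  exact le_rfl

lemma exists_le_eq_map_of_le_map {G' : Type*} [Group G'] {f : G →* G'} {H : Subgroup G'}
    (hH : H ≤ D.map f) : ∃ s ≤ D, H = s.map f := by
  refine ⟨(H.comap (f.comp D.subtype)).map D.subtype, map_subtype_le _, ?_⟩
  rw [map_map, map_comap_eq_self (by rwa [MonoidHom.range_comp, range_subtype])]

theorem subgroup_classification_P2_general [N.Normal] {p : ℕ} [Fact p.Prime]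
    (hp : Nat.card N = p) (hN : p.Coprime N.index) (hD : IsComplement' N D) (U : Subgroup G) :
    (∃ s : Subgroup G, s ≤ D ∧ U = N ⊔ s) ∨
    (∃ s : Subgroup G, s ≤ D ∧ ∃ n ∈ N, U = s.map (MulAut.conj n).toMonoidHom) := by
  subst hp
  rcases le_or_disjoint_of_prime_card (N := N) U with hNU | hU
  · left
    refine ⟨D ⊓ U, inf_le_left, ?_⟩
    rw [← sup_inf_assoc_of_normal_of_le hNU, hD.sup_eq_top, top_inf_eq]
  · right
    have : IsCyclic N := isCyclic_of_prime_card rfl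
    have hN_ne_one : Nat.card N ≠ 1 := (Fact.out : (Nat.card N).Prime).ne_one
    have : N.FiniteIndex := ⟨fun h => hN_ne_one (by rwa [h, Nat.coprime_zero_right] at hN)⟩
    obtain ⟨n, hn, hle⟩ := exists_le_map_conj_of_disjoint hN hD hU
    obtain ⟨s, hs, hUs⟩ := exists_le_eq_map_of_le_map hle
    exact ⟨s, hs, n, hn, hUs⟩

end NormalHallSubgroup

section UpperTriangular

variable {q : ℕ} [Fact q.Prime]

lemma ent_one_zero (g : P2 q) : ent g 1 0 = 0 := g.2

lemma ent_mul (g h : P2 q) (i j : Fin 2) :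
    ent (g * h) i j = ent g i 0 * ent h 0 j + ent g i 1 * ent h 1 j := by
  simp [ent, Matrix.mul_apply, Fin.sum_univ_two]

lemma P2_ext {g h : P2 q} (h00 : ent g 0 0 = ent h 0 0) (h01 : ent g 0 1 = ent h 0 1)
    (h11 : ent g 1 1 = ent h 1 1) : g = h := by
  refine Subtype.ext (Units.ext (Matrix.ext fun i j => ?_))
  fin_cases i <;> fin_cases j
  exacts [h00, h01, (ent_one_zero g).trans (ent_one_zero h).symm, h11]

/-- The character of `P(2,q)` sending a matrix to its `i`-th diagonal entry. -/
def diagEntry (q : ℕ) [Fact q.Prime] (i : Fin 2) : P2 q →* ZMod q where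
  toFun g := ent g i i
  map_one' := by simp [ent]
  map_mul' g h := by fin_cases i <;> simp [ent_mul, ent_one_zero]

/-- The projection of `P(2,q)` onto its diagonal torus `𝔽_qˣ × 𝔽_qˣ`, with kernel `U₀`. -/
def diagHom (q : ℕ) [Fact q.Prime] : P2 q →* (ZMod q)ˣ × (ZMod q)ˣ :=
  (diagEntry q 0).toHomUnits.prod (diagEntry q 1).toHomUnits

lemma ker_diagHom : (diagHom q).ker = U0 q := by
  ext g
  simp [MonoidHom.mem_ker, diagHom, Prod.ext_iff, Units.ext_iff, U0, diagEntry]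

instance U0_normal : (U0 q).Normal := ker_diagHom (q := q) ▸ inferInstance

lemma ent_diag_ne_zero (g : P2 q) (i : Fin 2) : ent g i i ≠ 0 :=
  ((diagEntry q i).toHomUnits g).ne_zero

/-- The transvection with upper right entry `x`, the general element of `U₀`. -/
def transvection (x : ZMod q) : P2 q :=
  ⟨Matrix.GeneralLinearGroup.upperRightHom x, by simp [P2]⟩

lemma ent_transvection_zero_one (x : ZMod q) : ent (transvection x) 0 1 = x := by
  simp [ent, transvection]

lemma transvection_mem_U0 (x : ZMod q) : transvection x ∈ U0 q := by
  simp [U0, ent, transvection]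

/-- The coordinate on `U₀` given by the upper right entry, used only to count `U₀`. -/
def U0Equiv (q : ℕ) [Fact q.Prime] : U0 q ≃ ZMod q where
  toFun u := ent u.1 0 1
  invFun x := ⟨transvection x, transvection_mem_U0 x⟩
  left_inv u := Subtype.ext (P2_ext ((transvection_mem_U0 _).1.trans u.2.1.symm)
    (ent_transvection_zero_one _) ((transvection_mem_U0 _).2.trans u.2.2.symm))
  right_inv := ent_transvection_zero_one

lemma card_U0 : Nat.card (U0 q) = q := by
  rw [Nat.card_congr (U0Equiv q), Nat.card_zmod]

lemma coprime_index_U0 : q.Coprime (U0 q).index := by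
  have hq : q.Prime := Fact.out
  have hdvd : (U0 q).index ∣ q.totient * q.totient := by
    rw [← ker_diagHom, index_ker]
    have hrange := card_subgroup_dvd_card (diagHom q).range
    rwa [Nat.card_prod, Nat.card_eq_fintype_card (α := (ZMod q)ˣ),
      ZMod.card_units_eq_totient] at hrange
  have hcop : q.Coprime q.totient :=
    Nat.coprime_of_lt_prime (Nat.totient_pos.mpr hq.pos).ne' (Nat.totient_lt q hq.one_lt) hq
  exact (hcop.mul_right hcop).of_dvd_right hdvd

lemma disjoint_U0_DiagSub : Disjoint (U0 q) (DiagSub q) := by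
  rw [disjoint_def]
  rintro u ⟨h00, h11⟩ (h01 : ent u 0 1 = 0)
  exact P2_ext (h00.trans (one_mem (U0 q)).1.symm) (h01.trans (one_mem (DiagSub q)).symm)
    (h11.trans (one_mem (U0 q)).2.symm)

lemma exists_mem_U0_mul_mem_DiagSub (g : P2 q) : ∃ u ∈ U0 q, u * g ∈ DiagSub q := by
  have hu := transvection_mem_U0 (-(ent g 0 1 / ent g 1 1))
  refine ⟨_, hu, ?_⟩
  change ent _ 0 1 = 0
  rw [ent_mul, hu.1, ent_transvection_zero_one, neg_mul, div_mul_cancel₀ _ (ent_diag_ne_zero g 1),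
    one_mul, add_neg_cancel]

lemma isComplement'_U0_DiagSub : IsComplement' (U0 q) (DiagSub q) := by
  refine isComplement'_of_disjoint_and_mul_eq_univ disjoint_U0_DiagSub
    (Set.eq_univ_of_forall fun g => ?_)
  obtain ⟨u, hu, hug⟩ := exists_mem_U0_mul_mem_DiagSub g
  exact ⟨u⁻¹, inv_mem hu, u * g, hug, inv_mul_cancel_left u g⟩

end UpperTriangular

/-- **Proposition (classification of subgroups of `P(2,q)`).** Every subgroup
`U` of the group `P(2,q)` of invertible upper triangular `2 × 2` matrices over
`𝔽_q` is either generated by the unipotent subgroup `U₀` together with a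
subgroup `s` of the diagonal subgroup `D`, or is a conjugate `u s u⁻¹` of a
subgroup `s ≤ D` by an element `u ∈ U₀`. -/
theorem subgroup_classification_P2 (q : ℕ) [Fact q.Prime] (U : Subgroup ↥(P2 q)) :
    (∃ s : Subgroup ↥(P2 q), s ≤ DiagSub q ∧ U = U0 q ⊔ s) ∨
    (∃ s : Subgroup ↥(P2 q), s ≤ DiagSub q ∧ ∃ u ∈ U0 q,
      U = Subgroup.map (MulAut.conj u).toMonoidHom s) :=
  subgroup_classification_P2_general card_U0 coprime_index_U0 isComplement'_U0_DiagSub U
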